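/- Extension Theorem. Let B be a noetherian normal integral domain containing ℚ, graded by a finitely generated abelian group G. Then: (a) for every H ∈ 𝕋(B), every derivation δ : B^{(H)} → B^{(H)} extends uniquely to a derivation D : B^{(H+𝔾̄(B))} → B^{(H+𝔾̄(B))}, and moreover if δ is locally nilpotent (respectively homogeneous) then so is D; (b) if H ∈ 𝒳(B), then H + 𝔾̄(B) ∈ 𝒳(B). -/

import Mathlib

noncomputable section

/-- A derivation is locally nilpotent. -/
def IsLND {R : Type*} [CommRing R] (D : Derivation ℤ R R) : Prop :=
  ∀ b : R, ∃ n : ℕ, 0 < n ∧ (⇑D)^[n] b = 0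

/-- Kernel of a derivation, as a subring. -/
def kerDer {R : Type*} [CommRing R] (D : Derivation ℤ R R) : Subring R where
  carrier := {x | D x = 0}
  one_mem' := by simp
  mul_mem' := by
    intro a b ha hb
    simp only [Set.mem_setOf_eq] at *
    rw [Derivation.leibniz, ha, hb]
    simp
  add_mem' := by
    intro a b ha hb
    simp only [Set.mem_setOf_eq] at *
    rw [map_add, ha, hb, add_zero]
  zero_mem' := by simp
  neg_mem' := by
    intro a ha
    simp only [Set.mem_setOf_eq] at *
    rw [map_neg, ha, neg_zero]

section Graded

variable {G : Type*} [AddCommGroup G] {B : Type*} [CommRing B]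

/-- The Veronese subring `B^{(H)} = ⊕_{i ∈ H} B_i` of a `G`-graded ring,
realized as the subring generated by the homogeneous elements whose degree lies in `H`. -/
def verSub (𝒜 : G → AddSubgroup B) (H : AddSubgroup G) : Subring B :=
  Subring.closure (⋃ i ∈ (H : Set G), (𝒜 i : Set B))

/-- 𝔾(B): the subgroup of G generated by the degrees of nonzero homogeneous elements. -/
def Gsub (𝒜 : G → AddSubgroup B) : AddSubgroup G :=
  AddSubgroup.closure { i : G | 𝒜 i ≠ ⊥ }

/-- `H ∈ 𝕋(B)`: the quotient `𝔾(B)/(H ∩ 𝔾(B))` is torsion. -/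
def Tmem (𝒜 : G → AddSubgroup B) (H : AddSubgroup G) : Prop :=
  ∀ g ∈ Gsub 𝒜, ∃ n : ℕ, 0 < n ∧ n • g ∈ H

/-- A homogeneous derivation of `B`. -/
def IsHomogDer (𝒜 : G → AddSubgroup B) (D : Derivation ℤ B B) : Prop :=
  ∃ d : G, ∀ (i : G) (x : B), x ∈ 𝒜 i → D x ∈ 𝒜 (i + d)

/-- A homogeneous derivation of a graded subring `S` of `B`. -/
def IsHomogDerOn (𝒜 : G → AddSubgroup B) (S : Subring B) (D : Derivation ℤ S S) : Prop :=
  ∃ d : G, ∀ (i : G) (x : S), (x : B) ∈ 𝒜 i → ((D x : S) : B) ∈ 𝒜 (i + d)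

/-- 𝕄̄(B,p): the subgroup of G generated by the degrees i with B_i ⊄ p. -/
def Mbar (𝒜 : G → AddSubgroup B) (p : Ideal B) : AddSubgroup G :=
  AddSubgroup.closure { i : G | ¬ (𝒜 i : Set B) ⊆ (p : Set B) }

/-- A prime ideal of height 1. -/
def heightOne {R : Type*} [CommRing R] (p : Ideal R) : Prop :=
  p.IsPrime ∧ (∃ q : Ideal R, q.IsPrime ∧ q < p) ∧
    ∀ q r : Ideal R, q.IsPrime → r.IsPrime → q < r → r < p → False

open Classical in
/-- 𝔾̄(B). -/
def Gbar (𝒜 : G → AddSubgroup B) : AddSubgroup G :=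
  if ∃ p : Ideal B, heightOne p then ⨅ p : {p : Ideal B // heightOne p}, Mbar 𝒜 p.1
  else Gsub 𝒜

end Graded

/-- `D` (a derivation of the subring `T` of `B`) extends `δ` (a derivation of the
subring `S` of `B`, with S ⊆ T). -/
def ExtendsDer {B : Type*} [CommRing B] (S T : Subring B)
    (δ : Derivation ℤ S S) (D : Derivation ℤ T T) : Prop :=
  ∀ (x : S) (y : T), (x : B) = (y : B) → ((δ x : S) : B) = ((D y : T) : B)

/-- `H ∈ 𝒳(B)`:  H ∈ 𝕋(B) and HLND(B^{(H)}) ≠ {0}. -/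
def Xmem {G : Type*} [AddCommGroup G] {B : Type*} [CommRing B]
    (𝒜 : G → AddSubgroup B) (H : AddSubgroup G) : Prop :=
  Tmem 𝒜 H ∧ ∃ D : Derivation ℤ (verSub 𝒜 H) (verSub 𝒜 H),
    IsLND D ∧ IsHomogDerOn 𝒜 (verSub 𝒜 H) D ∧ D ≠ 0

open TensorProduct in
theorem aux_ext_field {A K : Type*} [CommRing A] [IsDomain A] [Field K] [CharZero K] [Algebra A K]
    (hinj : Function.Injective (algebraMap A K)) [Algebra.IsAlgebraic A K]
    (d : Derivation ℤ A A) :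
    ∃ D : Derivation ℤ K K, ∀ a, D (algebraMap A K a) = algebraMap A K (d a) := by
  have : FaithfulSMul A K := (faithfulSMul_iff_algebraMap_injective A K).2 hinj
  have : CharZero A := by
    refine ⟨fun m n h => ?_⟩
    have := congrArg (algebraMap A K) h
    simpa using this
  let F := FractionRing A
  let : Algebra F K := FractionRing.liftAlgebra A K
  have : IsScalarTower A F K := FractionRing.isScalarTower_liftAlgebra A K
  have : CharZero F := charZero_of_injective_algebraMap (IsFractionRing.injective A F)
  have : Algebra.IsAlgebraic F K := (IsFractionRing.comap_isAlgebraic_iff (A := A)).1 inferInstance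
  have : Algebra.FormallyEtale F K := Algebra.FormallyEtale.of_isSeparable F K
  have : Algebra.FormallyEtale A F := Algebra.FormallyEtale.of_isLocalization (nonZeroDivisors A)
  have : Algebra.FormallyEtale A K := Algebra.FormallyEtale.comp A F K
  let d' : Derivation ℤ A K := (Algebra.linearMap A K).compDer d
  let l : Ω[A⁄ℤ] →ₗ[A] K := d'.liftKaehlerDifferential
  let L : Ω[K⁄ℤ] →ₗ[K] K := (LinearMap.liftBaseChange K l).comp
    (KaehlerDifferential.tensorKaehlerEquivOfFormallyEtale ℤ A K).symm.toLinearMap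
  refine ⟨L.compDer (KaehlerDifferential.D ℤ K), fun a => ?_⟩
  change (LinearMap.liftBaseChange K l)
    ((KaehlerDifferential.tensorKaehlerEquivOfFormallyEtale ℤ A K).symm
      (KaehlerDifferential.D ℤ K (algebraMap A K a))) = _
  rw [KaehlerDifferential.tensorKaehlerEquivOfFormallyEtale_symm_D_algebraMap]
  simp [l, d']

theorem aux_height_one {B K : Type*} [CommRing B] [IsDomain B] [IsNoetherianRing B]
    [IsIntegrallyClosed B] [Field K] [Algebra B K] [IsFractionRing B K] (z : K)
    (h : ∀ p : Ideal B, heightOne p →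
      ∃ s, s ∉ p ∧ ∃ b, algebraMap B K b = algebraMap B K s * z) :
    ∃ b, algebraMap B K b = z := by
  by_contra hz
  let cond : K → Ideal B := fun w =>
    (LinearMap.range (Algebra.linearMap B K)).comap (LinearMap.toSpanSingleton B K w)
  have hcond : ∀ w b, b ∈ cond w ↔ ∃ x, algebraMap B K x = algebraMap B K b * w := by
    intro w b
    simp [cond, Algebra.smul_def]
  let S : Set (Ideal B) := {I | ∃ c : B, (¬ ∃ b, algebraMap B K b = algebraMap B K c * z) ∧
    I = cond (algebraMap B K c * z)}
  have hS : S.Nonempty := ⟨_, 1, by simpa using hz, rfl⟩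
  obtain ⟨p, hp, hmax⟩ := set_has_maximal_iff_noetherian.2 ‹IsNoetherianRing B› S hS
  obtain ⟨c, hc, rfl⟩ := hp
  set w := algebraMap B K c * z with hw
  have hmono : ∀ a v, cond v ≤ cond (algebraMap B K a * v) := by
    intro a v b hb
    rw [hcond] at hb ⊢
    obtain ⟨x, hx⟩ := hb
    exact ⟨a * x, by rw [map_mul, hx]; ring⟩
  have hprime : (cond w).IsPrime := by
    refine ⟨?_, ?_⟩
    · rw [Ne, Ideal.eq_top_iff_one, hcond]
      simpa using hc
    · intro a b hab
      by_contra! hcon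
      obtain ⟨ha, hb⟩ := hcon
      have h1 : cond (algebraMap B K a * w) ∈ S := by
        refine ⟨a * c, ?_, ?_⟩
        · rw [hcond] at ha
          rwa [map_mul, mul_assoc]
        · rw [hw, map_mul, mul_assoc]
      have h2 := hmax _ h1
      have h3 : cond w = cond (algebraMap B K a * w) :=
        eq_of_le_of_not_lt (hmono a w) h2
      apply hb
      rw [h3, hcond]
      rw [hcond] at hab
      obtain ⟨x, hx⟩ := hab
      exact ⟨x, by rw [hx, map_mul]; ring⟩
  have hinj : Function.Injective (algebraMap B K) := IsFractionRing.injective B K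
  -- the prime contains a nonzero element
  have hne : cond w ≠ ⊥ := by
    obtain ⟨x, y, hy, hxy⟩ := IsFractionRing.div_surjective (A := B) w
    have hy0 : y ≠ 0 := nonZeroDivisors.ne_zero hy
    intro hbot
    apply hy0
    rw [← Ideal.mem_bot, ← hbot, hcond]
    refine ⟨x, ?_⟩
    rw [← hxy]
    have : algebraMap B K y ≠ 0 := by simpa using hy0
    field_simp
  have hex : ∃ t ∈ cond w, ∃ u, u ∉ cond w ∧ algebraMap B K u = algebraMap B K t * w := by
    by_contra! hcon
    have hint : IsIntegral B w := by
      refine isIntegral_of_smul_mem_submodule (M := K)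
        (Submodule.map (Algebra.linearMap B K) (cond w)) ?_ ?_ w ?_
      · intro hbot
        apply hne
        rw [eq_bot_iff]
        intro x hx
        have h1 : Algebra.linearMap B K x ∈ Submodule.map (Algebra.linearMap B K) (cond w) :=
          Submodule.mem_map_of_mem hx
        rw [hbot] at h1
        simpa using h1
      · exact Submodule.FG.map _ (IsNoetherian.noetherian _)
      · rintro _ ⟨t, ht, rfl⟩
        obtain ⟨u, hu⟩ := (hcond w t).1 ht
        refine ⟨u, ?_, ?_⟩
        · by_contra hu'
          exact hcon t ht u hu' hu
        · simp [hu, mul_comm]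
    obtain ⟨b, hb⟩ := IsIntegrallyClosed.isIntegral_iff.1 hint
    exact hc ⟨b, hb⟩
  obtain ⟨t, ht, u, hu, htu⟩ := hex
  have hmin : cond w ∈ (Ideal.span {t}).minimalPrimes := by
    refine ⟨⟨hprime, by simpa [Ideal.span_le] using ht⟩, ?_⟩
    rintro q ⟨hq, htq⟩ hqp b hb
    obtain ⟨e, he⟩ := (hcond w b).1 hb
    have h1 : b * u = e * t := by
      apply hinj
      rw [map_mul, map_mul, he, htu]; ring
    have h2 : b * u ∈ q := by
      rw [h1]
      exact q.mul_mem_left _ (htq (Ideal.mem_span_singleton_self t))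
    exact (hq.mem_or_mem h2).resolve_right fun h => hu (hqp h)
  have hht := Ideal.height_le_one_of_isPrincipal_of_mem_minimalPrimes _ _ hmin
  have hone : heightOne (cond w) := by
    refine ⟨hprime, ⟨⊥, Ideal.isPrime_bot, bot_lt_iff_ne_bot.2 hne⟩, ?_⟩
    intro q r hq hr hqr hrp
    have e1 : q.height + 1 ≤ r.height := by
      have := hq
      have := hr
      exact Ideal.height_add_one_le_of_lt_of_isPrime hqr
    have e2 : r.height + 1 ≤ (cond w).height := by
      have := hr
      exact Ideal.height_add_one_le_of_lt_of_isPrime hrp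
    have e3 : (1 : ℕ∞) + 1 ≤ 1 := by
      calc (1 : ℕ∞) + 1 ≤ (q.height + 1) + 1 := by gcongr; exact le_add_self
        _ ≤ r.height + 1 := by gcongr
        _ ≤ _ := e2
        _ ≤ 1 := hht
    norm_num at e3
  obtain ⟨s, hs, b, hb⟩ := h _ hone
  apply hs
  rw [hcond]
  exact ⟨c * b, by rw [map_mul, hb]; ring⟩

section LNDdeg
variable {R : Type*} [CommRing R] (D : Derivation ℤ R R)

theorem aux_iter_add (n : ℕ) (a b : R) : (⇑D)^[n] (a + b) = (⇑D)^[n] a + (⇑D)^[n] b :=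
  iterate_map_add D n a b

theorem aux_iter_zero (n : ℕ) : (⇑D)^[n] (0 : R) = 0 := iterate_map_zero D n

theorem aux_leib (N : ℕ) : ∀ (m l : ℕ) (a b : R), m + l = N → (⇑D)^[m + 1] a = 0 →
    (⇑D)^[l + 1] b = 0 →
    (⇑D)^[N] (a * b) = (N.choose m : R) * ((⇑D)^[m] a * (⇑D)^[l] b) := by
  induction N with
  | zero =>
    intro m l a b h ha hb
    obtain ⟨rfl, rfl⟩ : m = 0 ∧ l = 0 := by omega
    simp
  | succ N ih =>
    intro m l a b h ha hb
    rw [Function.iterate_succ_apply, Derivation.leibniz, aux_iter_add, smul_eq_mul, smul_eq_mul]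
    rcases m with _ | m
    · obtain rfl : l = N + 1 := by omega
      have ha' : D a = 0 := by simpa using ha
      rw [ha', mul_zero, aux_iter_zero, ih 0 N a (D b) (by omega) ha
        (by rw [← Function.iterate_succ_apply]; exact hb)]
      simp [Function.iterate_succ_apply]
    · rcases l with _ | l
      · obtain rfl : m = N := by omega
        have hb' : D b = 0 := by simpa using hb
        rw [hb', mul_zero, aux_iter_zero, mul_comm b, ih m 0 (D a) b (by omega)
          (by rw [← Function.iterate_succ_apply]; exact ha) hb]
        simp [Function.iterate_succ_apply]
      · rw [mul_comm b, ih (m + 1) l a (D b) (by omega) ha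
          (by rw [← Function.iterate_succ_apply]; exact hb),
          ih m (l + 1) (D a) b (by omega)
          (by rw [← Function.iterate_succ_apply]; exact ha) hb]
        rw [← Function.iterate_succ_apply, ← Function.iterate_succ_apply, Nat.choose_succ_succ]
        push_cast
        ring

def AuxDeg (a : R) (m : ℕ) : Prop := (⇑D)^[m] a ≠ 0 ∧ (⇑D)^[m + 1] a = 0

variable {D}

theorem AuxDeg.exists (h : IsLND D) {a : R} (ha : a ≠ 0) : ∃ m, AuxDeg D a m := by
  classical
  have hx : ∃ n, (⇑D)^[n] a = 0 := by
    obtain ⟨n, -, hn⟩ := h a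
    exact ⟨n, hn⟩
  have h1 := Nat.find_spec hx
  have h2 : ∀ m, m < Nat.find hx → (⇑D)^[m] a ≠ 0 := fun m hm => Nat.find_min hx hm
  rcases hk : Nat.find hx with _ | m
  · rw [hk] at h1
    exact absurd h1 ha
  · rw [hk] at h1 h2
    exact ⟨m, h2 m (Nat.lt_succ_self m), h1⟩

theorem AuxDeg.unique {a : R} {m l : ℕ} (h1 : AuxDeg D a m) (h2 : AuxDeg D a l) : m = l := by
  have key : ∀ {m l : ℕ}, AuxDeg D a m → AuxDeg D a l → ¬ m < l := by
    intro m l h1 h2 hlt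
    obtain ⟨k, rfl⟩ : ∃ k, l = k + (m + 1) := ⟨l - (m + 1), by omega⟩
    apply h2.1
    rw [Function.iterate_add_apply, h1.2, aux_iter_zero]
  have := key h1 h2
  have := key h2 h1
  omega

theorem AuxDeg.mul [IsDomain R] [CharZero R] {a b : R} {m l : ℕ} (h1 : AuxDeg D a m)
    (h2 : AuxDeg D b l) : AuxDeg D (a * b) (m + l) := by
  have h := aux_leib D (m + l) m l a b rfl h1.2 h2.2
  have h3 : (⇑D)^[m + l + 1] (a * b) = 0 := by
    rw [Function.iterate_succ_apply', h]
    rw [Derivation.leibniz, Derivation.leibniz, ← Function.iterate_succ_apply' (⇑D),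
      ← Function.iterate_succ_apply' (⇑D), h1.2, h2.2]
    simp
  refine ⟨?_, h3⟩
  rw [h]
  have : (((m + l).choose m : ℕ) : R) ≠ 0 :=
    Nat.cast_ne_zero.2 (Nat.choose_pos (by omega)).ne'
  exact mul_ne_zero this (mul_ne_zero h1.1 h2.1)

theorem AuxDeg.natCast [CharZero R] {n : ℕ} (hn : n ≠ 0) : AuxDeg D (n : R) 0 := by
  refine ⟨by simpa using hn, by simp⟩

theorem AuxDeg.pow [IsDomain R] [CharZero R] {a : R} {m : ℕ} (h : AuxDeg D a m) (n : ℕ) :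
    AuxDeg D (a ^ n) (n * m) := by
  induction n with
  | zero =>
    have := AuxDeg.natCast (D := D) (n := 1) one_ne_zero
    simpa using this
  | succ n ih =>
    rw [pow_succ, Nat.succ_mul]
    exact ih.mul h

theorem AuxDeg.der {a : R} {m : ℕ} (h : AuxDeg D a (m + 1)) : AuxDeg D (D a) m := by
  refine ⟨?_, ?_⟩
  · rw [← Function.iterate_succ_apply]; exact h.1
  · rw [← Function.iterate_succ_apply]; exact h.2

end LNDdeg

section AuxGraded
variable {G : Type*} [AddCommGroup G] [DecidableEq G] {B : Type*} [CommRing B]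
  (𝒜 : G → AddSubgroup B) [GradedRing 𝒜]

/-- elements supported in a coset -/
def auxV (H : AddSubgroup G) (c : G ⧸ H) : AddSubgroup B where
  carrier := {x | ∀ j : G, (j : G ⧸ H) ≠ c → (DirectSum.decompose 𝒜 x j : B) = 0}
  zero_mem' := by intro j _; simp
  add_mem' := by
    intro a b ha hb j hj
    simp [DirectSum.decompose_add, ha j hj, hb j hj]
  neg_mem' := by
    intro a ha j hj
    rw [DirectSum.decompose_neg]
    change ((-(DirectSum.decompose 𝒜 a j) : 𝒜 j) : B) = 0
    rw [NegMemClass.coe_neg, ha j hj, neg_zero]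

theorem auxV_mem {H : AddSubgroup G} {c : G ⧸ H} {x : B} : x ∈ auxV 𝒜 H c ↔
    ∀ j : G, (j : G ⧸ H) ≠ c → (DirectSum.decompose 𝒜 x j : B) = 0 := Iff.rfl

theorem auxV_homog {H : AddSubgroup G} {c : G ⧸ H} {i : G} (hi : (i : G ⧸ H) = c) {x : B}
    (hx : x ∈ 𝒜 i) : x ∈ auxV 𝒜 H c := by
  intro j hj
  apply DirectSum.decompose_of_mem_ne 𝒜 hx
  rintro rfl
  exact hj hi

theorem auxV_sum_induction {H : AddSubgroup G} {c : G ⧸ H} (P : AddSubgroup B)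
    (hP : ∀ j : G, (j : G ⧸ H) = c → ∀ x ∈ 𝒜 j, x ∈ auxV 𝒜 H c → x ∈ P) {x : B}
    (hx : x ∈ auxV 𝒜 H c) : x ∈ P := by
  classical
  rw [← DirectSum.sum_support_decompose 𝒜 x]
  refine P.sum_mem fun j hj => ?_
  by_cases h : (j : G ⧸ H) = c
  · exact hP j h _ (SetLike.coe_mem _) (auxV_homog 𝒜 h (SetLike.coe_mem _))
  · rw [hx j h]; exact P.zero_mem

theorem auxV_mul {H : AddSubgroup G} {c d : G ⧸ H} {x y : B} (hx : x ∈ auxV 𝒜 H c)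
    (hy : y ∈ auxV 𝒜 H d) : x * y ∈ auxV 𝒜 H (c + d) := by
  refine auxV_sum_induction 𝒜 ((auxV 𝒜 H (c + d)).comap (AddMonoidHom.mulRight y)) ?_ hx
  intro j hj x hx _
  change x * y ∈ auxV 𝒜 H (c + d)
  refine auxV_sum_induction 𝒜 ((auxV 𝒜 H (c + d)).comap (AddMonoidHom.mulLeft x)) ?_ hy
  intro k hk y hy _
  change x * y ∈ auxV 𝒜 H (c + d)
  exact auxV_homog 𝒜 (by simp [hj, hk]) (SetLike.mul_mem_graded hx hy)

theorem auxV_one {H : AddSubgroup G} : (1 : B) ∈ auxV 𝒜 H 0 :=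
  auxV_homog 𝒜 (i := 0) rfl (SetLike.one_mem_graded 𝒜)

theorem auxV_pow {H : AddSubgroup G} {c : G ⧸ H} {x : B} (hx : x ∈ auxV 𝒜 H c) (n : ℕ) :
    x ^ n ∈ auxV 𝒜 H (n • c) := by
  induction n with
  | zero => simpa using auxV_one 𝒜
  | succ n ih => rw [pow_succ, succ_nsmul]; exact auxV_mul 𝒜 ih hx

theorem verSub_homog {H : AddSubgroup G} {i : G} (hi : i ∈ H) {x : B} (hx : x ∈ 𝒜 i) :
    x ∈ verSub 𝒜 H :=
  Subring.subset_closure (Set.mem_biUnion hi hx)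

theorem verSub_iff {H : AddSubgroup G} {x : B} : x ∈ verSub 𝒜 H ↔ x ∈ auxV 𝒜 H 0 := by
  constructor
  · intro hx
    induction hx using Subring.closure_induction with
    | mem x hx =>
      simp only [Set.mem_iUnion] at hx
      obtain ⟨i, hi, hx⟩ := hx
      exact auxV_homog 𝒜 ((QuotientAddGroup.eq_zero_iff i).2 hi) hx
    | zero => exact zero_mem _
    | one => exact auxV_one 𝒜
    | add x y _ _ hx hy => exact add_mem hx hy
    | neg x _ hx => exact neg_mem hx
    | mul x y _ _ hx hy => simpa using auxV_mul 𝒜 hx hy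
  · intro hx
    refine auxV_sum_induction 𝒜 (verSub 𝒜 H).toAddSubgroup ?_ hx
    intro j hj x hx _
    exact verSub_homog 𝒜 ((QuotientAddGroup.eq_zero_iff j).1 hj) hx

theorem verSub_mono {H H' : AddSubgroup G} (h : H ≤ H') : verSub 𝒜 H ≤ verSub 𝒜 H' :=
  Subring.closure_mono (Set.biUnion_subset_biUnion_left h)

theorem auxV_le {H H' : AddSubgroup G} (h : H ≤ H') {i : G} (hi : i ∈ H') {x : B}
    (hx : x ∈ auxV 𝒜 H (i : G ⧸ H)) : x ∈ verSub 𝒜 H' := by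
  refine auxV_sum_induction 𝒜 (verSub 𝒜 H').toAddSubgroup ?_ hx
  intro j hj x hx _
  refine verSub_homog 𝒜 ?_ hx
  rw [eq_comm, QuotientAddGroup.eq] at hj
  have := add_mem hi (h hj)
  simpa using this

theorem auxV_cancel [IsDomain B] {H : AddSubgroup G} {m : G} {c : G ⧸ H} {f y : B}
    (hf : f ∈ 𝒜 m) (hf0 : f ≠ 0) (h : f * y ∈ auxV 𝒜 H ((m : G ⧸ H) + c)) :
    y ∈ auxV 𝒜 H c := by
  intro j hj
  have h1 := h (m + j) (by simpa using hj)
  rw [DirectSum.coe_decompose_mul_add_of_left_mem 𝒜 hf] at h1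
  exact (mul_eq_zero.1 h1).resolve_left hf0

theorem aux_homog_cancel [IsDomain B] {m k : G} {f y : B}
    (hf : f ∈ 𝒜 m) (hf0 : f ≠ 0) (h : f * y ∈ 𝒜 (m + k)) : y ∈ 𝒜 k := by
  classical
  have : y ∈ auxV 𝒜 ⊥ (k : G ⧸ (⊥ : AddSubgroup G)) :=
    auxV_cancel 𝒜 hf hf0 (auxV_homog 𝒜 (by simp) h)
  refine auxV_sum_induction 𝒜 (𝒜 k) ?_ this
  intro j hj x hx _
  rw [QuotientAddGroup.eq, AddSubgroup.mem_bot] at hj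
  have : j = k := by
    have := neg_add_eq_zero.1 hj
    exact this
  rwa [← this]

theorem aux_tors {H : AddSubgroup G} (hT : Tmem 𝒜 H) {i : G} {x : B} (hx : x ∈ 𝒜 i) (h0 : x ≠ 0) :
    ∃ k : ℕ, (k + 1) • i ∈ H := by
  have : i ∈ Gsub 𝒜 := AddSubgroup.subset_closure (by
    intro hb
    change 𝒜 i = ⊥ at hb
    rw [hb] at hx
    exact h0 (by simpa using hx))
  obtain ⟨n, hn, h⟩ := hT i this
  exact ⟨n - 1, by rwa [Nat.sub_add_cancel hn]⟩

/-- key coset containment -/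
theorem aux_key [IsDomain B] [CharZero B] {H : AddSubgroup G} {i : G} {k : ℕ} {x z : B}
    (hx : x ∈ 𝒜 i) (h0 : x ≠ 0) (hk : (k + 1) • i ∈ H)
    (hz : x ^ k * (((k + 1 : ℕ) : B) * z) ∈ verSub 𝒜 H) :
    ((k + 1 : ℕ) : B) * z ∈ auxV 𝒜 H (i : G ⧸ H) := by
  refine auxV_cancel 𝒜 (m := k • i) (SetLike.pow_mem_graded k hx) (pow_ne_zero _ h0) ?_
  rw [verSub_iff] at hz
  convert hz using 2
  rw [← QuotientAddGroup.mk_add, QuotientAddGroup.eq_zero_iff, ← succ_nsmul]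
  exact hk

theorem aux_natCast_cancel [IsDomain B] [CharZero B] {H : AddSubgroup G} {c : G ⧸ H} {n : ℕ}
    (hn : n ≠ 0) {z : B} (hz : (n : B) * z ∈ auxV 𝒜 H c) : z ∈ auxV 𝒜 H c := by
  refine auxV_cancel 𝒜 (m := 0) (f := (n : B)) (SetLike.natCast_mem_graded 𝒜 n)
    (Nat.cast_ne_zero.2 hn) ?_
  simpa using hz

/-- the shape of elements of `H ⊔ Mbar` -/
theorem aux_Mbar [IsDomain B] {H : AddSubgroup G} (hT : Tmem 𝒜 H) {p : Ideal B} (hp : p.IsPrime)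
    {i : G} (hi : i ∈ H ⊔ Mbar 𝒜 p) :
    ∃ m : G, ∃ s ∈ 𝒜 m, s ∉ p ∧ i - m ∈ H := by
  obtain ⟨h, hh, m, hm, rfl⟩ := AddSubgroup.mem_sup.1 hi
  suffices ∃ m' : G, ∃ s ∈ 𝒜 m', s ∉ p ∧ m - m' ∈ H by
    obtain ⟨m', s, hs, hsp, hmm⟩ := this
    refine ⟨m', s, hs, hsp, ?_⟩
    rw [add_sub_assoc]
    exact add_mem hh hmm
  clear hi
  have one_nmem : (1 : B) ∉ p := fun h => hp.ne_top ((Ideal.eq_top_iff_one p).2 h)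
  induction hm using AddSubgroup.closure_induction with
  | mem m hm =>
    obtain ⟨s, hs, hsp⟩ := Set.not_subset.1 hm
    exact ⟨m, s, hs, hsp, by simp⟩
  | zero => exact ⟨0, 1, SetLike.one_mem_graded 𝒜, one_nmem, by simp⟩
  | add a b _ _ ha hb =>
    obtain ⟨m1, s1, h1, h1p, h1H⟩ := ha
    obtain ⟨m2, s2, h2, h2p, h2H⟩ := hb
    refine ⟨m1 + m2, s1 * s2, SetLike.mul_mem_graded h1 h2, fun h =>
      (hp.mem_or_mem h).elim h1p h2p, ?_⟩
    rw [add_sub_add_comm]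
    exact add_mem h1H h2H
  | neg a _ ha =>
    obtain ⟨m1, s1, h1, h1p, h1H⟩ := ha
    obtain ⟨k, hk⟩ := aux_tors 𝒜 hT h1 (fun h => h1p (h ▸ p.zero_mem))
    refine ⟨k • m1, s1 ^ k, SetLike.pow_mem_graded k h1, fun h => h1p (hp.mem_of_pow_mem k h), ?_⟩
    have : -a - k • m1 = -(a - m1) - (k + 1) • m1 := by rw [succ_nsmul]; abel
    rw [this]
    exact sub_mem (neg_mem h1H) hk

end AuxGraded

section AuxMain
variable {G : Type*} [AddCommGroup G] [DecidableEq G] {B : Type*} [CommRing B] [IsDomain B]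
  (𝒜 : G → AddSubgroup B) [GradedRing 𝒜] {H H' : AddSubgroup G}

theorem aux_C_induction (P : AddSubgroup (verSub 𝒜 H'))
    (hP : ∀ (x : verSub 𝒜 H') (i : G), i ∈ H' → (x : B) ∈ 𝒜 i → x ∈ P) (x : verSub 𝒜 H') :
    x ∈ P := by
  have h := auxV_sum_induction 𝒜 (c := (0 : G ⧸ H'))
    (P.map (verSub 𝒜 H').subtype.toAddMonoidHom) ?_ ((verSub_iff 𝒜).1 x.2)
  · obtain ⟨y, hy, hyx⟩ := h
    have : y = x := Subtype.ext hyx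
    rwa [← this]
  · intro j hj y hy _
    have hj' : j ∈ H' := (QuotientAddGroup.eq_zero_iff j).1 hj
    exact ⟨⟨y, verSub_homog 𝒜 hj' hy⟩, hP _ j hj' hy, rfl⟩

theorem aux_rel (hH : H ≤ H') {δ : Derivation ℤ (verSub 𝒜 H) (verSub 𝒜 H)}
    {D : Derivation ℤ (verSub 𝒜 H') (verSub 𝒜 H')}
    (hD : ExtendsDer (verSub 𝒜 H) (verSub 𝒜 H') δ D) (y : verSub 𝒜 H') (k : ℕ)
    (hy : (y : B) ^ (k + 1) ∈ verSub 𝒜 H) :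
    (y : B) ^ k * (((k + 1 : ℕ) : B) * (D y : B)) = (δ ⟨(y : B) ^ (k + 1), hy⟩ : B) := by
  rw [hD ⟨(y : B) ^ (k + 1), hy⟩ (y ^ (k + 1)) rfl, Derivation.leibniz_pow]
  simp
  ring

theorem aux_pow_mem {i : G} {k : ℕ} (hk : (k + 1) • i ∈ H) {y : B}
    (hy : y ∈ auxV 𝒜 H (i : G ⧸ H)) : y ^ (k + 1) ∈ verSub 𝒜 H := by
  rw [verSub_iff]
  convert auxV_pow 𝒜 hy (k + 1) using 2
  rw [← QuotientAddGroup.mk_nsmul, eq_comm, QuotientAddGroup.eq_zero_iff]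
  exact hk

theorem aux_stab [CharZero B] (hT : Tmem 𝒜 H) (hH : H ≤ H')
    {δ : Derivation ℤ (verSub 𝒜 H) (verSub 𝒜 H)}
    {D : Derivation ℤ (verSub 𝒜 H') (verSub 𝒜 H')}
    (hD : ExtendsDer (verSub 𝒜 H) (verSub 𝒜 H') δ D) {i : G} (hi : i ∈ H') (y : verSub 𝒜 H')
    (hy : (y : B) ∈ auxV 𝒜 H (i : G ⧸ H)) : (D y : B) ∈ auxV 𝒜 H (i : G ⧸ H) := by
  let P : AddSubgroup (verSub 𝒜 H') := (auxV 𝒜 H (i : G ⧸ H)).comap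
    ((verSub 𝒜 H').subtype.toAddMonoidHom.comp (D : verSub 𝒜 H' →+ verSub 𝒜 H'))
  have h := auxV_sum_induction 𝒜 (P.map (verSub 𝒜 H').subtype.toAddMonoidHom) ?_ hy
  · obtain ⟨x, hx, hxy⟩ := h
    have : x = y := Subtype.ext hxy
    rw [← this]
    exact hx
  · intro j hj x hx hxV
    refine ⟨⟨x, auxV_le 𝒜 hH hi hxV⟩, ?_, rfl⟩
    change (D ⟨x, _⟩ : B) ∈ auxV 𝒜 H (i : G ⧸ H)
    by_cases h0 : x = 0
    · subst h0
      have : (⟨0, auxV_le 𝒜 hH hi hxV⟩ : verSub 𝒜 H') = 0 := rfl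
      rw [this, map_zero]
      exact zero_mem _
    · obtain ⟨k, hk⟩ := aux_tors 𝒜 hT hx h0
      have hp : x ^ (k + 1) ∈ verSub 𝒜 H := verSub_homog 𝒜 hk (SetLike.pow_mem_graded _ hx)
      have hr := aux_rel 𝒜 hH hD ⟨x, auxV_le 𝒜 hH hi hxV⟩ k hp
      rw [← hj]
      refine aux_natCast_cancel 𝒜 (Nat.succ_ne_zero k) (aux_key 𝒜 hx h0 hk ?_)
      rw [hr]
      exact SetLike.coe_mem _

theorem aux_unique [CharZero B] (hT : Tmem 𝒜 H) (hH : H ≤ H')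
    {δ : Derivation ℤ (verSub 𝒜 H) (verSub 𝒜 H)}
    {D D' : Derivation ℤ (verSub 𝒜 H') (verSub 𝒜 H')}
    (hD : ExtendsDer (verSub 𝒜 H) (verSub 𝒜 H') δ D)
    (hD' : ExtendsDer (verSub 𝒜 H) (verSub 𝒜 H') δ D') : D = D' := by
  ext x
  congr 1
  refine aux_C_induction 𝒜 (AddMonoidHom.eqLocus (D : verSub 𝒜 H' →+ verSub 𝒜 H')
    (D' : verSub 𝒜 H' →+ verSub 𝒜 H')) ?_ x
  intro x i hi hx
  change D x = D' x
  by_cases h0 : (x : B) = 0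
  · have : x = 0 := Subtype.ext h0
    simp [this]
  · obtain ⟨k, hk⟩ := aux_tors 𝒜 hT hx h0
    have hp : (x : B) ^ (k + 1) ∈ verSub 𝒜 H := verSub_homog 𝒜 hk (SetLike.pow_mem_graded _ hx)
    have hr := (aux_rel 𝒜 hH hD x k hp).trans (aux_rel 𝒜 hH hD' x k hp).symm
    exact Subtype.ext (mul_left_cancel₀ (Nat.cast_ne_zero.2 (Nat.succ_ne_zero k))
      (mul_left_cancel₀ (pow_ne_zero _ h0) hr))

theorem aux_homog [CharZero B] (hT : Tmem 𝒜 H) (hH : H ≤ H')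
    {δ : Derivation ℤ (verSub 𝒜 H) (verSub 𝒜 H)}
    {D : Derivation ℤ (verSub 𝒜 H') (verSub 𝒜 H')}
    (hD : ExtendsDer (verSub 𝒜 H) (verSub 𝒜 H') δ D)
    (hδ : IsHomogDerOn 𝒜 (verSub 𝒜 H) δ) : IsHomogDerOn 𝒜 (verSub 𝒜 H') D := by
  obtain ⟨d, hd⟩ := hδ
  refine ⟨d, fun i x hx => ?_⟩
  by_cases h0 : (x : B) = 0
  · have : x = 0 := Subtype.ext h0
    rw [this, map_zero]
    exact zero_mem _
  · obtain ⟨k, hk⟩ := aux_tors 𝒜 hT hx h0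
    have hp : (x : B) ^ (k + 1) ∈ verSub 𝒜 H := verSub_homog 𝒜 hk (SetLike.pow_mem_graded _ hx)
    have hr := aux_rel 𝒜 hH hD x k hp
    have h1 := hd ((k + 1) • i) ⟨(x : B) ^ (k + 1), hp⟩ (SetLike.pow_mem_graded _ hx)
    rw [← hr] at h1
    refine aux_homog_cancel 𝒜 (m := 0) (f := ((k + 1 : ℕ) : B)) (SetLike.natCast_mem_graded 𝒜 _)
      (Nat.cast_ne_zero.2 (Nat.succ_ne_zero k)) ?_
    refine aux_homog_cancel 𝒜 (m := k • i) (SetLike.pow_mem_graded k hx) (pow_ne_zero _ h0) ?_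
    convert h1 using 2
    rw [succ_nsmul]; abel

theorem aux_nilp [CharZero B] (hT : Tmem 𝒜 H) (hH : H ≤ H')
    {δ : Derivation ℤ (verSub 𝒜 H) (verSub 𝒜 H)}
    {D : Derivation ℤ (verSub 𝒜 H') (verSub 𝒜 H')}
    (hD : ExtendsDer (verSub 𝒜 H) (verSub 𝒜 H') δ D) (hδ : IsLND δ)
    {i : G} (hi : i ∈ H') {k : ℕ} (hk : (k + 1) • i ∈ H) (d : ℕ) :
    ∀ (y : verSub 𝒜 H') (hy : (y : B) ∈ auxV 𝒜 H (i : G ⧸ H)),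
      AuxDeg δ ⟨(y : B) ^ (k + 1), aux_pow_mem 𝒜 hk hy⟩ d → ∃ N : ℕ, (⇑D)^[N] y = 0 := by
  have : CharZero (verSub 𝒜 H) := ⟨fun m n h => by
    have := congrArg (fun t : verSub 𝒜 H => (t : B)) h
    simpa using this⟩
  induction d using Nat.strong_induction_on with
  | _ d ih =>
    intro y hy hdeg
    have hw := aux_stab 𝒜 hT hH hD hi y hy
    have hr := aux_rel 𝒜 hH hD y k (aux_pow_mem 𝒜 hk hy)
    set p : verSub 𝒜 H := ⟨(y : B) ^ (k + 1), aux_pow_mem 𝒜 hk hy⟩ with hp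
    set q : verSub 𝒜 H := ⟨(D y : B) ^ (k + 1), aux_pow_mem 𝒜 hk hw⟩ with hq
    by_cases hy0 : (y : B) = 0
    · exact ⟨0, Subtype.ext hy0⟩
    by_cases hw0 : (D y : B) = 0
    · exact ⟨1, Subtype.ext hw0⟩
    have hcast : ((k + 1 : ℕ) : B) ≠ 0 := Nat.cast_ne_zero.2 (Nat.succ_ne_zero k)
    rcases d with _ | e
    · exfalso
      have h1 : δ p = 0 := hdeg.2
      rw [h1] at hr
      exact mul_ne_zero (pow_ne_zero k hy0) (mul_ne_zero hcast hw0) hr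
    · have hq0 : q ≠ 0 := fun h => pow_ne_zero (k + 1) hw0 (congrArg Subtype.val h)
      obtain ⟨d', hd'⟩ := AuxDeg.exists hδ hq0
      have heq : (((k + 1 : ℕ) : verSub 𝒜 H) ^ (k + 1) * p ^ k) * q = (δ p) ^ (k + 1) := by
        apply Subtype.ext
        change (((k + 1 : ℕ) : B) ^ (k + 1) * ((y : B) ^ (k + 1)) ^ k) * (D y : B) ^ (k + 1) =
          (δ p : B) ^ (k + 1)
        rw [← hr]
        ring
      have g1 := hdeg.der.pow (k + 1)
      have g2 := (((AuxDeg.natCast (D := δ) (Nat.succ_ne_zero k)).pow (k + 1)).mul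
        (hdeg.pow k)).mul hd'
      rw [← heq] at g1
      have g3 := g1.unique g2
      have hlt : d' < e + 1 := by
        have : (k + 1) * 0 + k * (e + 1) + d' = k * e + k + d' := by ring
        have : (k + 1) * e = k * e + e := by ring
        omega
      obtain ⟨N, hN⟩ := ih d' hlt (D y) hw hd'
      exact ⟨N + 1, by rw [Function.iterate_succ_apply]; exact hN⟩

theorem aux_lnd [CharZero B] (hT : Tmem 𝒜 H) (hH : H ≤ H')
    {δ : Derivation ℤ (verSub 𝒜 H) (verSub 𝒜 H)}
    {D : Derivation ℤ (verSub 𝒜 H') (verSub 𝒜 H')}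
    (hD : ExtendsDer (verSub 𝒜 H) (verSub 𝒜 H') δ D) (hδ : IsLND δ) : IsLND D := by
  let P : AddSubgroup (verSub 𝒜 H') :=
    { carrier := {x | ∃ N : ℕ, (⇑D)^[N] x = 0}
      zero_mem' := ⟨0, rfl⟩
      add_mem' := by
        rintro a b ⟨m, hm⟩ ⟨n, hn⟩
        refine ⟨m + n, ?_⟩
        rw [aux_iter_add, Function.iterate_add_apply _ m n b, hn, aux_iter_zero, add_comm m n,
          Function.iterate_add_apply _ n m a, hm, aux_iter_zero, add_zero]
      neg_mem' := by
        rintro a ⟨m, hm⟩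
        refine ⟨m, ?_⟩
        rw [iterate_map_neg, hm, neg_zero] }
  intro x
  obtain ⟨N, hN⟩ : x ∈ P := by
    refine aux_C_induction 𝒜 P ?_ x
    intro x i hi hx
    by_cases h0 : (x : B) = 0
    · exact ⟨0, Subtype.ext h0⟩
    · obtain ⟨k, hk⟩ := aux_tors 𝒜 hT hx h0
      have hxV : (x : B) ∈ auxV 𝒜 H (i : G ⧸ H) := auxV_homog 𝒜 rfl hx
      have hne : (⟨(x : B) ^ (k + 1), aux_pow_mem 𝒜 hk hxV⟩ : verSub 𝒜 H) ≠ 0 :=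
        fun h => pow_ne_zero (k + 1) h0 (congrArg Subtype.val h)
      obtain ⟨d, hd⟩ := AuxDeg.exists hδ hne
      exact aux_nilp 𝒜 hT hH hD hδ hi hk d x hxV hd
  exact ⟨N + 1, Nat.succ_pos N, by rw [Function.iterate_succ_apply', hN, map_zero]⟩

theorem aux_isAlgebraic (hT : Tmem 𝒜 H) : Algebra.IsAlgebraic (verSub 𝒜 H) B := by
  have : Algebra.IsIntegral (verSub 𝒜 H) B := by
    classical
    refine ⟨fun b => ?_⟩
    rw [← DirectSum.sum_support_decompose 𝒜 b]
    refine IsIntegral.sum _ fun j hj => ?_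
    have h0 : (DirectSum.decompose 𝒜 b j : B) ≠ 0 := by simpa using hj
    obtain ⟨k, hk⟩ := aux_tors 𝒜 hT (SetLike.coe_mem _) h0
    refine IsIntegral.of_pow (Nat.succ_pos k) ?_
    exact isIntegral_algebraMap (R := verSub 𝒜 H) (A := B)
      (x := ⟨_, verSub_homog 𝒜 hk (SetLike.pow_mem_graded _ (SetLike.coe_mem _))⟩)
  infer_instance

theorem aux_exists_aux (K : Type*) [Field K] [Algebra B K] [IsFractionRing B K]
    [IsNoetherianRing B] [IsIntegrallyClosed B] [Algebra ℚ B] (hT : Tmem 𝒜 H)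
    (δ : Derivation ℤ (verSub 𝒜 H) (verSub 𝒜 H)) :
    ∃ D : Derivation ℤ (verSub 𝒜 (H ⊔ Gbar 𝒜)) (verSub 𝒜 (H ⊔ Gbar 𝒜)),
      ExtendsDer (verSub 𝒜 H) (verSub 𝒜 (H ⊔ Gbar 𝒜)) δ D := by
  have : CharZero B := algebraRat.charZero B
  have hinj : Function.Injective (algebraMap B K) := IsFractionRing.injective B K
  have : CharZero K := charZero_of_injective_algebraMap hinj
  have hAinj : Function.Injective (algebraMap (verSub 𝒜 H) K) :=
    hinj.comp Subtype.val_injective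
  have : FaithfulSMul (verSub 𝒜 H) K := (faithfulSMul_iff_algebraMap_injective _ K).2 hAinj
  have : Module.IsTorsionFree (verSub 𝒜 H) K := inferInstance
  have : Algebra.IsAlgebraic (verSub 𝒜 H) B := aux_isAlgebraic 𝒜 hT
  have : Algebra.IsAlgebraic (verSub 𝒜 H) K :=
    (IsFractionRing.isAlgebraic_iff' (verSub 𝒜 H) B K).1 inferInstance
  obtain ⟨E, hE0⟩ := aux_ext_field hAinj δ
  have hE : ∀ (b : B) (hb : b ∈ verSub 𝒜 H),
      E (algebraMap B K b) = algebraMap B K (δ ⟨b, hb⟩ : B) := fun b hb => hE0 ⟨b, hb⟩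
  have hpow : ∀ (s : K) (l : ℕ), E (s ^ (l + 1)) = ((l + 1 : ℕ) : K) * s ^ l * E s := by
    intro s l
    rw [Derivation.leibniz_pow]
    simp
    ring
  have hH : H ≤ H ⊔ Gbar 𝒜 := le_sup_left
  have hom : ∀ i ∈ H ⊔ Gbar 𝒜, ∀ x ∈ 𝒜 i, ∃ z ∈ verSub 𝒜 (H ⊔ Gbar 𝒜),
      algebraMap B K z = E (algebraMap B K x) := by
    intro i hi x hx
    by_cases h0 : x = 0
    · exact ⟨0, zero_mem _, by simp [h0]⟩
    have hz : ∃ z, algebraMap B K z = E (algebraMap B K x) := by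
      apply aux_height_one
      intro p hp
      have hle : Gbar 𝒜 ≤ Mbar 𝒜 p := by
        unfold Gbar
        rw [if_pos ⟨p, hp⟩]
        exact iInf_le (fun p : {p : Ideal B // heightOne p} => Mbar 𝒜 p.1) ⟨p, hp⟩
      obtain ⟨m, s, hs, hsp, him⟩ := aux_Mbar 𝒜 hT hp.1 (sup_le_sup_left hle H hi)
      have hs0 : s ≠ 0 := fun h => hsp (h ▸ p.zero_mem)
      obtain ⟨l, hl⟩ := aux_tors 𝒜 hT hs hs0
      have ha : x * s ^ l ∈ verSub 𝒜 H := by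
        refine verSub_homog 𝒜 (i := i + l • m) ?_
          (SetLike.mul_mem_graded hx (SetLike.pow_mem_graded l hs))
        have : i + l • m = (i - m) + (l + 1) • m := by rw [succ_nsmul]; abel
        rw [this]
        exact add_mem him hl
      have hsl : s ^ (l + 1) ∈ verSub 𝒜 H := verSub_homog 𝒜 hl (SetLike.pow_mem_graded _ hs)
      refine ⟨((l + 1 : ℕ) : B) * s ^ (l + 1), ?_,
        ((l + 1 : ℕ) : B) * s * (δ ⟨_, ha⟩ : B) - (l : B) * x * (δ ⟨_, hsl⟩ : B), ?_⟩
      · intro hmem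
        rcases hp.1.mem_or_mem hmem with h | h
        · apply hp.1.ne_top
          refine Ideal.eq_top_of_isUnit_mem p h ?_
          have hu : IsUnit ((l + 1 : ℕ) : ℚ) :=
            IsUnit.mk0 _ (Nat.cast_ne_zero.2 (Nat.succ_ne_zero l))
          have := hu.map (algebraMap ℚ B)
          rwa [map_natCast] at this
        · exact hsp (hp.1.mem_of_pow_mem _ h)
      · have e0 := hE _ ha
        have e1 := hE _ hsl
        rw [map_mul, map_pow, Derivation.leibniz, smul_eq_mul, smul_eq_mul] at e0
        rw [map_pow, hpow] at e1
        have e2 := hpow (algebraMap B K s) l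
        rw [pow_succ, Derivation.leibniz, smul_eq_mul, smul_eq_mul] at e2
        simp only [map_sub, map_mul, map_pow, map_natCast]
        rw [← e0, ← e1]
        push_cast at e2 ⊢
        linear_combination ((l : K) + 1) * (algebraMap B K x) * e2
    obtain ⟨z, hz⟩ := hz
    refine ⟨z, ?_, hz⟩
    obtain ⟨k, hk⟩ := aux_tors 𝒜 hT hx h0
    have hp : x ^ (k + 1) ∈ verSub 𝒜 H := verSub_homog 𝒜 hk (SetLike.pow_mem_graded _ hx)
    refine auxV_le 𝒜 hH hi (aux_natCast_cancel 𝒜 (Nat.succ_ne_zero k)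
      (aux_key 𝒜 hx h0 hk ?_))
    have : x ^ k * (((k + 1 : ℕ) : B) * z) = (δ ⟨_, hp⟩ : B) := by
      apply hinj
      rw [← hE _ hp, map_pow, hpow, ← hz]
      simp only [map_mul, map_pow, map_natCast]
      ring
    rw [this]
    exact SetLike.coe_mem _
  have hall : ∀ x : verSub 𝒜 (H ⊔ Gbar 𝒜), ∃ z : verSub 𝒜 (H ⊔ Gbar 𝒜),
      algebraMap B K z = E (algebraMap B K x) := by
    intro x
    let P : AddSubgroup (verSub 𝒜 (H ⊔ Gbar 𝒜)) :=
      { carrier := {x | ∃ z : verSub 𝒜 (H ⊔ Gbar 𝒜), algebraMap B K z = E (algebraMap B K x)}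
        zero_mem' := ⟨0, by simp⟩
        add_mem' := by
          rintro a b ⟨u, hu⟩ ⟨v, hv⟩
          exact ⟨u + v, by simp [hu, hv]⟩
        neg_mem' := by
          rintro a ⟨u, hu⟩
          exact ⟨-u, by simp [hu]⟩ }
    refine aux_C_induction 𝒜 P ?_ x
    intro x i hi hx
    obtain ⟨z, hz, h⟩ := hom i hi x hx
    exact ⟨⟨z, hz⟩, h⟩
  choose f hf using hall
  have hfinj : ∀ u v : verSub 𝒜 (H ⊔ Gbar 𝒜),
      algebraMap B K u = algebraMap B K v → u = v := fun u v h => Subtype.ext (hinj h)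
  let F : verSub 𝒜 (H ⊔ Gbar 𝒜) →+ verSub 𝒜 (H ⊔ Gbar 𝒜) :=
    { toFun := f
      map_zero' := hfinj _ _ (by rw [hf]; simp)
      map_add' := fun a b => hfinj _ _ (by
        rw [hf, Subring.coe_add, Subring.coe_add, map_add, map_add, map_add, hf, hf]) }
  refine ⟨Derivation.mk' F.toIntLinearMap fun a b => hfinj _ _ ?_, ?_⟩
  · change algebraMap B K (f (a * b) : B) = algebraMap B K ((a : B) * f b + (b : B) * f a)
    rw [hf, Subring.coe_mul, map_mul, Derivation.leibniz, map_add, map_mul, map_mul, hf, hf,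
      smul_eq_mul, smul_eq_mul]
  · intro x y hxy
    apply hinj
    change _ = algebraMap B K (f y : B)
    rw [hf, ← hxy, hE _ x.2]

theorem aux_exists [IsNoetherianRing B] [IsIntegrallyClosed B] [Algebra ℚ B] (hT : Tmem 𝒜 H)
    (δ : Derivation ℤ (verSub 𝒜 H) (verSub 𝒜 H)) :
    ∃ D : Derivation ℤ (verSub 𝒜 (H ⊔ Gbar 𝒜)) (verSub 𝒜 (H ⊔ Gbar 𝒜)),
      ExtendsDer (verSub 𝒜 H) (verSub 𝒜 (H ⊔ Gbar 𝒜)) δ D :=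
  aux_exists_aux 𝒜 (FractionRing B) hT δ

end AuxMain

/-- **Extension Theorem.** Let B be a noetherian normal ℚ-domain graded by a finitely
generated abelian group G.  Then:
(a) if H ∈ 𝕋(B), every derivation δ of B^{(H)} extends uniquely to a derivation D of
    B^{(H + 𝔾̄(B))}; moreover if δ is locally nilpotent (resp. homogeneous) then so is
    any such extension D;
(b) if H ∈ 𝒳(B) then H + 𝔾̄(B) ∈ 𝒳(B). -/
theorem extension_theorem
    {G : Type*} [AddCommGroup G] [DecidableEq G] [AddGroup.FG G]
    {B : Type*} [CommRing B] [IsDomain B] [IsNoetherianRing B] [IsIntegrallyClosed B]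
    [Algebra ℚ B]
    (𝒜 : G → AddSubgroup B) [GradedRing 𝒜] :
    (∀ H : AddSubgroup G, Tmem 𝒜 H →
      ∀ δ : Derivation ℤ (verSub 𝒜 H) (verSub 𝒜 H),
        (∃! D : Derivation ℤ (verSub 𝒜 (H ⊔ Gbar 𝒜)) (verSub 𝒜 (H ⊔ Gbar 𝒜)),
          ExtendsDer (verSub 𝒜 H) (verSub 𝒜 (H ⊔ Gbar 𝒜)) δ D) ∧
        (∀ D : Derivation ℤ (verSub 𝒜 (H ⊔ Gbar 𝒜)) (verSub 𝒜 (H ⊔ Gbar 𝒜)),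
          ExtendsDer (verSub 𝒜 H) (verSub 𝒜 (H ⊔ Gbar 𝒜)) δ D →
            (IsLND δ → IsLND D) ∧
            (IsHomogDerOn 𝒜 (verSub 𝒜 H) δ →
              IsHomogDerOn 𝒜 (verSub 𝒜 (H ⊔ Gbar 𝒜)) D))) ∧
    (∀ H : AddSubgroup G, Xmem 𝒜 H → Xmem 𝒜 (H ⊔ Gbar 𝒜)) := by
  have : CharZero B := algebraRat.charZero B
  refine ⟨fun H hT δ => ⟨?_, fun D hD => ⟨aux_lnd 𝒜 hT le_sup_left hD,
    aux_homog 𝒜 hT le_sup_left hD⟩⟩, ?_⟩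
  · obtain ⟨D, hD⟩ := aux_exists 𝒜 hT δ
    exact ⟨D, hD, fun D' hD' => aux_unique 𝒜 hT le_sup_left hD' hD⟩
  · rintro H ⟨hT, δ, hL, hhom, h0⟩
    obtain ⟨D, hD⟩ := aux_exists 𝒜 hT δ
    refine ⟨fun g hg => ?_, D, aux_lnd 𝒜 hT le_sup_left hD hL,
      aux_homog 𝒜 hT le_sup_left hD hhom, ?_⟩
    · obtain ⟨n, hn, h⟩ := hT g hg
      exact ⟨n, hn, AddSubgroup.mem_sup_left h⟩
    · rintro rfl
      apply h0
      ext x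
      have := hD x ⟨x, verSub_mono 𝒜 le_sup_left x.2⟩ rfl
      simpa using this
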